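/- Let (R, m, k) be a commutative Noetherian local ring with dim_k soc(R) > 1, where soc(R) = (0 :_R m). Then for every natural number N there exists an indecomposable R-module requiring at least N generators; in particular, R has infinitely many pairwise non-isomorphic finitely generated indecomposable modules. -/

import Mathlib

open IsLocalRing

/-- A matrix that is constant along diagonals, whose last row vanishes off the last column and
whose first row vanishes off the first column, is scalar. -/
lemma eq_single_of_shift_invariant {k : Type*} [Zero k] {m : ℕ} (w : Fin (m + 1) → Fin (m + 1) → k)
    (hw : ∀ j i : Fin m, w j.castSucc i.castSucc = w j.succ i.succ)
    (hlast : ∀ j : Fin m, w j.castSucc (Fin.last m) = 0)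
    (hzero : ∀ j : Fin m, w j.succ 0 = 0) (j : Fin (m + 1)) :
    w j = Pi.single j (w 0 0) := by
  have hlt : ∀ i j : Fin (m + 1), j < i → w j i = 0 := by
    intro i
    induction i using Fin.reverseInduction with
    | last =>
      intro j hj
      obtain ⟨j, rfl⟩ := Fin.exists_castSucc_eq.2 hj.ne
      exact hlast j
    | cast i ih =>
      intro j hj
      obtain ⟨j, rfl⟩ := Fin.exists_castSucc_eq.2 (hj.trans (Fin.castSucc_lt_last i)).ne
      rw [hw]
      exact ih _ (Fin.succ_lt_succ_iff.2 (Fin.castSucc_lt_castSucc_iff.1 hj))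
  have hgt : ∀ i j : Fin (m + 1), i < j → w j i = 0 := by
    intro i
    induction i using Fin.induction with
    | zero =>
      intro j hj
      obtain ⟨j, rfl⟩ := Fin.exists_succ_eq.2 hj.ne'
      exact hzero j
    | succ i ih =>
      intro j hj
      obtain ⟨j, rfl⟩ := Fin.exists_succ_eq.2 ((Fin.succ_pos i).trans hj).ne'
      rw [← hw]
      exact ih _ (Fin.castSucc_lt_castSucc_iff.2 (Fin.succ_lt_succ_iff.1 hj))
  have hdiag : ∀ j : Fin (m + 1), w j j = w 0 0 := by
    intro j
    induction j using Fin.induction with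
    | zero => rfl
    | succ j ih => rw [← hw, ih]
  ext i
  rcases lt_trichotomy i j with h | rfl | h
  · rw [hgt i j h, Pi.single_eq_of_ne h.ne]
  · rw [hdiag, Pi.single_eq_same]
  · rw [hlt i j h, Pi.single_eq_of_ne h.ne']

section

variable {R : Type*} [CommRing R]

/-- The submodule of `R ^ (m + 1)` generated by the elements `x e_j + y e_{j+1}`. -/
def pencilSubmodule (x y : R) (m : ℕ) : Submodule R (Fin (m + 1) → R) :=
  Submodule.span R (Set.range fun j : Fin m ↦
    (x • Pi.single j.castSucc 1 + y • Pi.single j.succ 1 : Fin (m + 1) → R))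

lemma exists_of_mem_pencilSubmodule {x y : R} {m : ℕ} {v : Fin (m + 1) → R}
    (hv : v ∈ pencilSubmodule x y m) :
    ∃ c : Fin m → R, ∀ i, v i = x * (Fin.snoc c 0 : Fin (m + 1) → R) i
      + y * (Fin.cons 0 c : Fin (m + 1) → R) i := by
  induction hv using Submodule.span_induction with
  | mem v hv =>
    obtain ⟨j, rfl⟩ := hv
    refine ⟨Pi.single j 1, fun i ↦ ?_⟩
    have h₁ : (Fin.snoc (Pi.single j 1 : Fin m → R) 0 : Fin (m + 1) → R) i =
        (Pi.single j.castSucc 1 : Fin (m + 1) → R) i := by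
      cases i using Fin.lastCases with
      | last => simp [(Fin.castSucc_lt_last j).ne']
      | cast i => simp [Pi.single_apply]
    have h₂ : (Fin.cons 0 (Pi.single j 1 : Fin m → R) : Fin (m + 1) → R) i =
        (Pi.single j.succ 1 : Fin (m + 1) → R) i := by
      cases i using Fin.cases with
      | zero => simp [(Fin.succ_ne_zero j).symm]
      | succ i => simp [Pi.single_apply]
    rw [h₁, h₂]
    rfl
  | zero =>
    refine ⟨0, fun i ↦ ?_⟩
    have h₁ : (Fin.snoc (0 : Fin m → R) 0 : Fin (m + 1) → R) i = 0 := by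
      cases i using Fin.lastCases <;> simp
    have h₂ : (Fin.cons 0 (0 : Fin m → R) : Fin (m + 1) → R) i = 0 := by
      cases i using Fin.cases <;> simp
    simp [h₁, h₂]
  | add u v _ _ hu hv =>
    obtain ⟨c, hc⟩ := hu
    obtain ⟨d, hd⟩ := hv
    refine ⟨c + d, fun i ↦ ?_⟩
    have h₁ : (Fin.snoc (c + d) 0 : Fin (m + 1) → R) i =
        (Fin.snoc c 0 : Fin (m + 1) → R) i + (Fin.snoc d 0 : Fin (m + 1) → R) i := by
      cases i using Fin.lastCases <;> simp
    have h₂ : (Fin.cons 0 (c + d) : Fin (m + 1) → R) i =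
        (Fin.cons 0 c : Fin (m + 1) → R) i + (Fin.cons 0 d : Fin (m + 1) → R) i := by
      cases i using Fin.cases <;> simp
    rw [h₁, h₂, Pi.add_apply, hc, hd]
    ring
  | smul a v _ hv =>
    obtain ⟨c, hc⟩ := hv
    refine ⟨a • c, fun i ↦ ?_⟩
    have h₁ : (Fin.snoc (a • c) 0 : Fin (m + 1) → R) i =
        a * (Fin.snoc c 0 : Fin (m + 1) → R) i := by
      cases i using Fin.lastCases <;> simp
    have h₂ : (Fin.cons 0 (a • c) : Fin (m + 1) → R) i =
        a * (Fin.cons 0 c : Fin (m + 1) → R) i := by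
      cases i using Fin.cases <;> simp
    rw [h₁, h₂, Pi.smul_apply, hc, smul_eq_mul]
    ring

variable [IsLocalRing R]

lemma pi_mem_maximalIdeal_smul_top {n : ℕ} {v : Fin n → R} (hv : ∀ i, v i ∈ maximalIdeal R) :
    v ∈ maximalIdeal R • (⊤ : Submodule R (Fin n → R)) := by
  rw [pi_eq_sum_univ' v]
  exact Submodule.sum_mem _ fun i _ ↦ Submodule.smul_mem_smul (hv i) trivial

/-- Every endomorphism of `R ^ (m + 1) / (x e_j + y e_{j+1})` is scalar modulo the maximal ideal. -/
lemma exists_apply_sub_smul_mem {x y : R}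
    (hind : ∀ a b : R, a * x + b * y = 0 → a ∈ maximalIdeal R ∧ b ∈ maximalIdeal R) (m : ℕ)
    (f : ((Fin (m + 1) → R) ⧸ pencilSubmodule x y m) →ₗ[R]
      ((Fin (m + 1) → R) ⧸ pencilSubmodule x y m)) :
    ∃ r : R, ∀ z, f z - r • z ∈
      maximalIdeal R • (⊤ : Submodule R ((Fin (m + 1) → R) ⧸ pencilSubmodule x y m)) := by
  choose v hv using fun j : Fin (m + 1) ↦
    Submodule.mkQ_surjective _ (f (Submodule.mkQ _ (Pi.single j 1)))
  have hrel (j : Fin m) : x • v j.castSucc + y • v j.succ ∈ pencilSubmodule x y m := by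
    rw [← Submodule.Quotient.mk_eq_zero, ← Submodule.mkQ_apply, map_add, map_smul, map_smul, hv, hv,
      ← map_smul, ← map_smul, ← map_smul, ← map_smul, ← map_add, ← map_add]
    convert map_zero f
    rw [Submodule.mkQ_apply, Submodule.Quotient.mk_eq_zero]
    exact Submodule.subset_span ⟨j, rfl⟩
  choose c hc using fun j ↦ exists_of_mem_pencilSubmodule (hrel j)
  have hres (j : Fin m) (i : Fin (m + 1)) :
      residue R (v j.castSucc i) = residue R ((Fin.snoc (c j) 0 : Fin (m + 1) → R) i) ∧
      residue R (v j.succ i) = residue R ((Fin.cons 0 (c j) : Fin (m + 1) → R) i) := by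
    rw [← sub_eq_zero, ← map_sub, residue_eq_zero_iff, ← sub_eq_zero (a := residue R (v j.succ i)),
      ← map_sub, residue_eq_zero_iff]
    apply hind
    have := hc j i
    simp only [Pi.add_apply, Pi.smul_apply, smul_eq_mul] at this
    linear_combination this
  have hscalar := eq_single_of_shift_invariant (fun j i ↦ residue R (v j i))
    (fun j i ↦ by rw [(hres j _).1, (hres j _).2, Fin.snoc_castSucc, Fin.cons_succ])
    (fun j ↦ by rw [(hres j _).1, Fin.snoc_last, map_zero])
    (fun j ↦ by rw [(hres j _).2, Fin.cons_zero, map_zero])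
  refine ⟨v 0 0, fun z ↦ ?_⟩
  have hbasis (j : Fin (m + 1)) : f (Submodule.mkQ _ (Pi.single j 1)) -
      v 0 0 • Submodule.mkQ _ (Pi.single j 1) ∈
      maximalIdeal R • (⊤ : Submodule R ((Fin (m + 1) → R) ⧸ pencilSubmodule x y m)) := by
    rw [← hv, ← map_smul, ← map_sub]
    have hmem := Submodule.mem_map_of_mem (f := (pencilSubmodule x y m).mkQ) (pi_mem_maximalIdeal_smul_top
      (v := v j - v 0 0 • Pi.single j 1) fun i ↦ by
        rw [← residue_eq_zero_iff]
        have := congrFun (hscalar j) i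
        by_cases h : i = j
        · subst h; simpa [sub_eq_zero] using this
        · simpa [h] using this)
    rw [Submodule.map_smul''] at hmem
    exact Submodule.smul_mono le_rfl le_top hmem
  obtain ⟨u, rfl⟩ := Submodule.mkQ_surjective _ z
  rw [pi_eq_sum_univ' u, map_sum, map_sum, Finset.smul_sum, ← Finset.sum_sub_distrib]
  refine Submodule.sum_mem _ fun j _ ↦ ?_
  rw [map_smul, map_smul, smul_comm, ← smul_sub]
  exact Submodule.smul_mem _ _ (hbasis j)

lemma eq_bot_or_eq_bot_of_isCompl {x y : R}
    (hind : ∀ a b : R, a * x + b * y = 0 → a ∈ maximalIdeal R ∧ b ∈ maximalIdeal R) (m : ℕ)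
    (N₁ N₂ : Submodule R ((Fin (m + 1) → R) ⧸ pencilSubmodule x y m)) (h : IsCompl N₁ N₂) :
    N₁ = ⊥ ∨ N₂ = ⊥ := by
  have htop (N : Submodule R ((Fin (m + 1) → R) ⧸ pencilSubmodule x y m))
      (hN : ⊤ ≤ N ⊔ maximalIdeal R • ⊤) : N = ⊤ :=
    top_le_iff.1 <| Submodule.le_of_le_smul_of_le_jacobson_bot Module.Finite.fg_top
      (maximalIdeal_le_jacobson ⊥) hN
  obtain ⟨r, hr⟩ := exists_apply_sub_smul_mem hind m (N₁.projection N₂ h)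
  have hproj (z) : N₁.projection N₂ h z ∈ N₁ := Submodule.projection_apply_mem h z
  have hsub (z) : z - N₁.projection N₂ h z ∈ N₂ := by
    rw [← Submodule.projection_apply_eq_zero_iff h, map_sub,
      Submodule.projection_apply_of_mem_left h (hproj z), sub_self]
  by_cases hrm : r ∈ maximalIdeal R
  · left
    have hN : N₂ = ⊤ := htop N₂ fun z _ ↦ by
      rw [← sub_add_cancel z (N₁.projection N₂ h z)]
      refine Submodule.add_mem_sup (hsub z) ?_
      rw [← sub_add_cancel (N₁.projection N₂ h z) (r • z)]
      exact Submodule.add_mem _ (hr z) (Submodule.smul_mem_smul hrm trivial)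
    subst hN
    exact disjoint_top.1 h.disjoint
  · right
    have hN : N₁ = ⊤ := htop N₁ fun z _ ↦ by
      rw [← (Submodule.smul_mem_iff_of_isUnit _ (notMem_maximalIdeal.1 hrm)),
        ← sub_sub_cancel (N₁.projection N₂ h z) (r • z)]
      exact Submodule.sub_mem _ (Submodule.mem_sup_left (hproj z)) (Submodule.mem_sup_right (hr z))
    subst hN
    exact top_disjoint.1 h.disjoint

lemma pencilSubmodule_le_ker {x y : R} (hx : x ∈ maximalIdeal R) (hy : y ∈ maximalIdeal R) (m : ℕ) :
    pencilSubmodule x y m ≤ LinearMap.ker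
      (LinearMap.compLeft (Algebra.linearMap R (ResidueField R)) (Fin (m + 1))) := by
  rw [pencilSubmodule, Submodule.span_le]
  rintro _ ⟨j, rfl⟩
  rw [SetLike.mem_coe, LinearMap.mem_ker]
  ext i
  have hx' := (residue_eq_zero_iff x).2 hx
  have hy' := (residue_eq_zero_iff y).2 hy
  simp [ResidueField.algebraMap_eq, hx', hy']

lemma exists_surjective_residueField {x y : R} (hx : x ∈ maximalIdeal R) (hy : y ∈ maximalIdeal R)
    (m : ℕ) : ∃ q : ((Fin (m + 1) → R) ⧸ pencilSubmodule x y m) →ₗ[R]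
      (Fin (m + 1) → ResidueField R), Function.Surjective q := by
  refine ⟨Submodule.liftQ _ _ (pencilSubmodule_le_ker hx hy m), ?_⟩
  intro w
  choose u hu using fun i ↦ residue_surjective (w i)
  exact ⟨Submodule.Quotient.mk u, funext hu⟩

lemma le_card_of_span_eq_top {M : Type*} [AddCommGroup M] [Module R M] {n : ℕ}
    {q : M →ₗ[R] (Fin n → ResidueField R)} (hq : Function.Surjective q) (s : Finset M)
    (hs : Submodule.span R (s : Set M) = ⊤) : n ≤ s.card := by
  classical
  have hspan : Submodule.span (ResidueField R) ((s.image q : Finset _) : Set (Fin n → ResidueField R))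
      = ⊤ := by
    rw [← top_le_iff]
    intro w _
    apply Submodule.span_le_restrictScalars R (ResidueField R)
    rw [Finset.coe_image, ← Submodule.map_span, hs, Submodule.map_top, LinearMap.range_eq_top.2 hq]
    trivial
  have := finrank_span_finset_le_card (R := ResidueField R) (s.image q)
  rw [Set.finrank, hspan, finrank_top, Module.finrank_fin_fun] at this
  exact this.trans Finset.card_image_le

lemma le_of_linearEquiv {x y : R} (hx : x ∈ maximalIdeal R) (hy : y ∈ maximalIdeal R) {m m' : ℕ}
    (e : ((Fin (m + 1) → R) ⧸ pencilSubmodule x y m) ≃ₗ[R]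
      ((Fin (m' + 1) → R) ⧸ pencilSubmodule x y m')) : m' ≤ m := by
  classical
  obtain ⟨q, hq⟩ := exists_surjective_residueField hx hy m'
  let g : (Fin (m + 1) → R) →ₗ[R] _ := q ∘ₗ e.toLinearMap ∘ₗ (pencilSubmodule x y m).mkQ
  have hg : Function.Surjective g :=
    hq.comp (e.surjective.comp (Submodule.mkQ_surjective _))
  have := le_card_of_span_eq_top hg (Finset.univ.image (Pi.basisFun R (Fin (m + 1))))
    (by
      rw [Finset.coe_image, Finset.coe_univ, Set.image_univ]
      exact (Pi.basisFun R (Fin (m + 1))).span_eq)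
  have h := this.trans Finset.card_image_le
  simpa using h

end

/-- If `dim_k soc(R) > 1` (witnessed by two socle elements `x`, `y` linearly
independent over `k`), then for every `N` there is a finitely presented indecomposable
`R`-module requiring at least `N` generators; in particular there are infinitely many
pairwise non-isomorphic finitely generated indecomposable `R`-modules. -/
theorem stmt7 (R : Type*) [CommRing R] [IsNoetherianRing R] [IsLocalRing R]
    (x y : R)
    (hx : ∀ a ∈ IsLocalRing.maximalIdeal R, a * x = 0)
    (hy : ∀ a ∈ IsLocalRing.maximalIdeal R, a * y = 0)
    (hind : ∀ a b : R, a * x + b * y = 0 →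
      a ∈ IsLocalRing.maximalIdeal R ∧ b ∈ IsLocalRing.maximalIdeal R) :
    (∀ N : ℕ, ∃ (n : ℕ) (K : Submodule R (Fin n → R)),
      Nontrivial ((Fin n → R) ⧸ K) ∧
      (∀ N₁ N₂ : Submodule R ((Fin n → R) ⧸ K), IsCompl N₁ N₂ → N₁ = ⊥ ∨ N₂ = ⊥) ∧
      (∀ s : Finset ((Fin n → R) ⧸ K),
        Submodule.span R (s : Set ((Fin n → R) ⧸ K)) = ⊤ → N ≤ s.card)) ∧
    ∃ (d : ℕ → ℕ) (K : ∀ m : ℕ, Submodule R (Fin (d m) → R)),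
      (∀ m, Nontrivial ((Fin (d m) → R) ⧸ K m) ∧
        ∀ N₁ N₂ : Submodule R ((Fin (d m) → R) ⧸ K m), IsCompl N₁ N₂ → N₁ = ⊥ ∨ N₂ = ⊥) ∧
      (∀ m m', m ≠ m' →
        IsEmpty (((Fin (d m) → R) ⧸ K m) ≃ₗ[R] ((Fin (d m') → R) ⧸ K m'))) := by
  obtain ⟨hym, hxm⟩ := hind y (-x) (by ring)
  rw [neg_mem_iff] at hxm
  have hnon (m : ℕ) : Nontrivial ((Fin (m + 1) → R) ⧸ pencilSubmodule x y m) := by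
    obtain ⟨q, hq⟩ := exists_surjective_residueField hxm hym m
    exact hq.nontrivial
  refine ⟨fun N ↦ ⟨N + 1, pencilSubmodule x y N, hnon N, eq_bot_or_eq_bot_of_isCompl hind N,
    fun s hs ↦ ?_⟩, fun m ↦ m + 1, fun m ↦ pencilSubmodule x y m,
    fun m ↦ ⟨hnon m, eq_bot_or_eq_bot_of_isCompl hind m⟩, fun m m' hne ↦ ⟨fun e ↦ hne ?_⟩⟩
  · obtain ⟨q, hq⟩ := exists_surjective_residueField hxm hym N
    exact (Nat.le_succ N).trans (le_card_of_span_eq_top hq s hs)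
  · exact le_antisymm (le_of_linearEquiv hxm hym e.symm) (le_of_linearEquiv hxm hym e)
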